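/- arXiv:2509.22840 — 3 statements merged into one kernel-verified Lean document; each statement's English description precedes it below -/
import Mathlib

section
/- Let G = (V, E) be a directed graph on m vertices with m' edges (no parallel edges), and let Δ be the maximum of the maximum out-degree and the maximum in-degree of G. Then for every positive integer d, the edge set E can be partitioned into H = ⌈m'/d⌉ + Δ (possibly empty) sets M_1,…,M_H such that each M_k is a matching — no two edges of M_k share a source vertex and no two share a target vertex — and |M_k| ≤ d for every k. -/
/-- Maximum of the maximum out-degree and the maximum in-degree of a directed graph
given by its edge set `E`. -/
def maxDeg {m : ℕ} (E : Finset (Fin m × Fin m)) : ℕ :=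
  (Finset.univ.sup fun v : Fin m => (E.filter fun e => e.1 = v).card) ⊔
  (Finset.univ.sup fun v : Fin m => (E.filter fun e => e.2 = v).card)

/-!
Regard the edges as joining left copies of vertices (sources) to right copies (targets).
The matrix of edge multiplicities has line sums at most `Δ`, so it is an off-diagonal block of a
symmetric matrix all of whose line sums equal `Δ`. By Birkhoff's theorem the latter is a sum of `Δ`
permutation matrices, whose blocks are the color classes of a proper edge coloring (Kőnig). A color
class with `n` edges is then cut into `⌊n / d⌋ + 1` batches of size at most `d`, and the sum of
`⌊n / d⌋` over the color classes is at most `⌊m' / d⌋`.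
-/

open Finset Matrix

section PermMatrix

variable {V : Type*} [Fintype V] {B : Matrix V V ℕ} {D : ℕ}

theorem exists_perm_forall_apply_pos (hD : 0 < D) (hrow : ∀ i, ∑ j, B i j = D)
    (hcol : ∀ j, ∑ i, B i j = D) : ∃ σ : Equiv.Perm V, ∀ i, 0 < B i (σ i) := by
  classical
  have hD' : (D : ℚ) ≠ 0 := by positivity
  have hmem : of (fun i j => (B i j : ℚ) / D) ∈ doublyStochastic ℚ V := by
    rw [mem_doublyStochastic_iff_sum]
    refine ⟨fun i j => by simp only [of_apply]; positivity, fun i => ?_, fun j => ?_⟩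
    · simp only [of_apply, ← sum_div, ← Nat.cast_sum, hrow, div_self hD']
    · simp only [of_apply, ← sum_div, ← Nat.cast_sum, hcol, div_self hD']
  obtain ⟨w, hw_nonneg, hw_sum, hw⟩ := exists_eq_sum_perm_of_mem_doublyStochastic hmem
  obtain ⟨σ, -, hσ⟩ : ∃ σ ∈ univ, 0 < w σ := exists_lt_of_sum_lt (by simp [hw_sum])
  refine ⟨σ, fun i => ?_⟩
  have hle : w σ ≤ (B i (σ i) : ℚ) / D := calc
    w σ = (w σ • σ.permMatrix ℚ) i (σ i) := by simp [PEquiv.toMatrix_apply]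
    _ ≤ ∑ τ, (w τ • τ.permMatrix ℚ) i (σ i) :=
      single_le_sum (f := fun τ => (w τ • τ.permMatrix ℚ) i (σ i)) (fun τ _ => mul_nonneg
        (hw_nonneg τ) (nonneg_of_mem_doublyStochastic permMatrix_mem_doublyStochastic)) (mem_univ σ)
    _ = (B i (σ i) : ℚ) / D := by rw [← Matrix.sum_apply, hw, of_apply]
  refine Nat.pos_of_ne_zero fun hzero => ?_
  simp only [hzero, Nat.cast_zero, zero_div] at hle
  exact hle.not_gt hσ

theorem exists_sum_permMatrix_eq [DecidableEq V] (hrow : ∀ i, ∑ j, B i j = D)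
    (hcol : ∀ j, ∑ i, B i j = D) : ∃ σ : Fin D → Equiv.Perm V, ∑ k, (σ k).permMatrix ℕ = B := by
  induction D generalizing B with
  | zero =>
    refine ⟨Fin.elim0, ?_⟩
    ext i j
    simpa using ((sum_eq_zero_iff.1 (hrow i)) j (mem_univ j)).symm
  | succ D ih =>
    obtain ⟨τ, hτ⟩ := exists_perm_forall_apply_pos D.succ_pos hrow hcol
    obtain ⟨C, rfl⟩ : ∃ C, B = τ.permMatrix ℕ + C := by
      refine ⟨of fun i j => B i j - τ.permMatrix ℕ i j, ?_⟩
      ext i j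
      refine (Nat.add_sub_of_le ?_).symm
      by_cases hij : τ i = j
      · subst hij
        simpa [PEquiv.toMatrix_apply] using Nat.one_le_iff_ne_zero.2 (hτ i).ne'
      · simp [PEquiv.toMatrix_apply, hij]
    have hrow_perm (i : V) : ∑ j, τ.permMatrix ℕ i j = 1 := by simp [PEquiv.toMatrix_apply]
    have hcol_perm (j : V) : ∑ i, τ.permMatrix ℕ i j = 1 := by
      simp [PEquiv.toMatrix_apply, ← Equiv.eq_symm_apply]
    simp only [Matrix.add_apply, sum_add_distrib, hrow_perm, hcol_perm, add_comm 1,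
      Nat.add_right_cancel_iff] at hrow hcol
    obtain ⟨σ, hσ⟩ := ih hrow hcol
    exact ⟨Fin.cons τ σ, by simp [Fin.sum_univ_succ, hσ]⟩

end PermMatrix

section RegularCompletion

variable {α β : Type*} [Fintype α] [Fintype β] [DecidableEq α] [DecidableEq β]

/-- The symmetric square matrix with off-diagonal blocks `A` and `Aᵀ` whose diagonal blocks top up
every line sum to `D`: the biadjacency matrix of a `D`-regular bipartite multigraph containing the
one of `A`. The subtraction is truncated, so this is meaningful when the line sums of `A` are at
most `D`. -/
def regularCompletion (D : ℕ) (A : Matrix α β ℕ) : Matrix (α ⊕ β) (α ⊕ β) ℕ :=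
  fromBlocks (diagonal fun a => D - ∑ b, A a b) A Aᵀ (diagonal fun b => D - ∑ a, A a b)

variable {D : ℕ} {A : Matrix α β ℕ}

theorem isSymm_regularCompletion : (regularCompletion D A).IsSymm :=
  (isSymm_diagonal _).fromBlocks rfl (isSymm_diagonal _)

theorem sum_regularCompletion_apply (hrow : ∀ a, ∑ b, A a b ≤ D) (hcol : ∀ b, ∑ a, A a b ≤ D)
    (x : α ⊕ β) : ∑ y, regularCompletion D A x y = D := by
  rcases x with a | b
  · simp [regularCompletion, diagonal_apply, Nat.sub_add_cancel (hrow a)]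
  · simp [regularCompletion, diagonal_apply, Nat.add_sub_cancel' (hcol b)]

theorem exists_perm_card_filter_eq (hrow : ∀ a, ∑ b, A a b ≤ D) (hcol : ∀ b, ∑ a, A a b ≤ D) :
    ∃ σ : Fin D → Equiv.Perm (α ⊕ β), ∀ a b, #{k | σ k (.inl a) = .inr b} = A a b := by
  have hsum := sum_regularCompletion_apply hrow hcol
  obtain ⟨σ, hσ⟩ := exists_sum_permMatrix_eq hsum fun y => by
    simpa only [isSymm_regularCompletion.apply] using hsum y
  refine ⟨σ, fun a b => ?_⟩
  have hab := congrFun₂ hσ (.inl a) (.inr b)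
  simpa [Matrix.sum_apply, PEquiv.toMatrix_apply, regularCompletion] using hab

end RegularCompletion

theorem exists_embedding_sigma_of_card_fiber_le {ι γ : Type*} [Fintype ι] [DecidableEq γ]
    (f : ι → γ) (P : γ → Type*) [∀ p, Fintype (P p)]
    (h : ∀ p, #{e | f e = p} ≤ Fintype.card (P p)) :
    ∃ g : ι ↪ Σ p, P p, ∀ e, (g e).1 = f e := by
  have hfiber (p : γ) : Nonempty ({e // f e = p} ↪ P p) :=
    Function.Embedding.nonempty_of_card_le (by simpa only [Fintype.card_subtype] using h p)
  exact ⟨(Equiv.sigmaFiberEquiv f).symm.toEmbedding.trans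
    (.sigmaMap (.refl γ) fun p => (hfiber p).some), fun _ => rfl⟩

section EdgeColoring

variable {ι α β κ : Type*}

/-- Proper edge colorings of the bipartite multigraph with edge type `ι` in which `e` joins the
left vertex `src e` to the right vertex `tgt e`: every color class is a matching. -/
def IsProperEdgeColoring (src : ι → α) (tgt : ι → β) (c : ι → κ) : Prop :=
  ∀ ⦃e e'⦄, c e = c e' → e ≠ e' → src e ≠ src e' ∧ tgt e ≠ tgt e'

variable [Fintype ι] [DecidableEq α] [DecidableEq β] {src : ι → α} {tgt : ι → β} {D : ℕ}

theorem exists_isProperEdgeColoring_of_finite [Finite α] [Finite β]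
    (hsrc : ∀ a, #{e | src e = a} ≤ D) (htgt : ∀ b, #{e | tgt e = b} ≤ D) :
    ∃ c : ι → Fin D, IsProperEdgeColoring src tgt c := by
  have := Fintype.ofFinite α
  have := Fintype.ofFinite β
  let A : Matrix α β ℕ := of fun a b => #{e | (src e, tgt e) = (a, b)}
  have hrow (a : α) : ∑ b, A a b ≤ D := by
    refine le_of_eq_of_le ?_ (hsrc a)
    rw [card_eq_sum_card_fiberwise (f := tgt) (t := univ) (fun _ _ => mem_coe.2 (mem_univ _))]
    simp only [A, of_apply, Prod.mk.injEq, filter_filter]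
  have hcol (b : β) : ∑ a, A a b ≤ D := by
    refine le_of_eq_of_le ?_ (htgt b)
    rw [card_eq_sum_card_fiberwise (f := src) (t := univ) (fun _ _ => mem_coe.2 (mem_univ _))]
    simp only [A, of_apply, Prod.mk.injEq, filter_filter, and_comm]
  obtain ⟨σ, hσ⟩ := exists_perm_card_filter_eq hrow hcol
  obtain ⟨g, hg⟩ := exists_embedding_sigma_of_card_fiber_le (fun e => (src e, tgt e))
    (fun p => {k // σ k (.inl p.1) = .inr p.2})
    fun p => by rw [Fintype.card_subtype, hσ]; rfl
  have hmaps (e : ι) : σ (g e).2 (.inl (src e)) = .inr (tgt e) := by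
    simpa only [hg] using (g e).2.2
  have hinj {e e' : ι} (hc : (g e).2.1 = (g e').2.1) (hs : src e = src e')
      (ht : tgt e = tgt e') : e = e' :=
    g.injective (Sigma.subtype_ext (by rw [hg, hg, hs, ht]) hc)
  refine ⟨fun e => (g e).2, fun e e' (hc : (g e).2.1 = (g e').2.1) hne =>
    ⟨fun hs => hne (hinj hc hs ?_), fun ht => hne (hinj hc ?_ ht)⟩⟩
  · exact Sum.inr_injective (by rw [← hmaps, ← hmaps, hc, hs])
  · exact Sum.inl_injective ((σ (g e).2).injective (by rw [hmaps, hc, hmaps, ht]))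

theorem exists_isProperEdgeColoring (hsrc : ∀ a, #{e | src e = a} ≤ D)
    (htgt : ∀ b, #{e | tgt e = b} ≤ D) : ∃ c : ι → Fin D, IsProperEdgeColoring src tgt c := by
  obtain ⟨c, hc⟩ := exists_isProperEdgeColoring_of_finite
    (src := Set.rangeFactorization src) (tgt := Set.rangeFactorization tgt) (D := D)
    (fun _ => by simpa only [Subtype.ext_iff, Set.rangeFactorization_coe] using hsrc _)
    (fun _ => by simpa only [Subtype.ext_iff, Set.rangeFactorization_coe] using htgt _)
  exact ⟨c, by simpa only [IsProperEdgeColoring, ne_eq, Subtype.ext_iff,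
    Set.rangeFactorization_coe] using hc⟩

end EdgeColoring

section Batching

variable {ι κ : Type*} [Fintype ι] [Fintype κ]

theorem sum_card_fiber_div_le [DecidableEq κ] (c : ι → κ) (d : ℕ) :
    ∑ k, #{e | c e = k} / d ≤ Fintype.card ι / d := by
  rcases d.eq_zero_or_pos with rfl | hd
  · simp
  rw [Nat.le_div_iff_mul_le hd, sum_mul]
  calc ∑ k, #{e | c e = k} / d * d ≤ ∑ k, #{e | c e = k} :=
        sum_le_sum fun k _ => Nat.div_mul_le_self _ d
    _ = Fintype.card ι := (card_eq_sum_card_fiberwise fun e _ => mem_coe.2 (mem_univ (c e))).symm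

theorem exists_refinement_card_fiber_le {d H : ℕ} (hd : 0 < d) (c : ι → κ)
    (hH : Fintype.card ι / d + Fintype.card κ ≤ H) :
    ∃ c' : ι → Fin H, (∀ e e', c' e = c' e' → c e = c e') ∧ ∀ k, #{e | c' e = k} ≤ d := by
  classical
  let batches (k : κ) : ℕ := #{e | c e = k} / d + 1
  obtain ⟨g, hg⟩ := exists_embedding_sigma_of_card_fiber_le c (fun k => Fin (batches k) × Fin d)
    fun k => by
      simpa [batches, mul_comm] using (Nat.lt_mul_div_succ #{e | c e = k} hd).le
  have hcard : Fintype.card (Σ k, Fin (batches k)) ≤ Fintype.card (Fin H) := by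
    have hsum := sum_card_fiber_div_le c d
    simp only [Fintype.card_sigma, Fintype.card_fin, batches, sum_add_distrib, sum_const,
      card_univ, smul_eq_mul, mul_one]
    lia
  obtain ⟨label⟩ := Function.Embedding.nonempty_of_card_le hcard
  refine ⟨fun e => label ⟨(g e).1, (g e).2.1⟩, fun e e' h => ?_, fun k => ?_⟩
  · rw [← hg, ← hg]
    exact congrArg (fun b => b.1) (label.injective h)
  · have hinj : Set.InjOn (fun e => (g e).2.2)
        ({e | label ⟨(g e).1, (g e).2.1⟩ = k} : Finset ι) := by
      intro e he e' he' hpos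
      simp only [coe_filter, mem_univ, true_and, Set.mem_ofPred_eq] at he he'
      have hbatch := label.injective (he.trans he'.symm)
      exact g.injective ((Equiv.sigmaProdDistrib _ _).symm.injective (Prod.ext hbatch hpos))
    simpa using card_le_card_of_injOn _ (fun _ _ => mem_coe.2 (mem_univ _)) hinj

end Batching

theorem stmt_8_general {ι α β : Type*} [DecidableEq α] [DecidableEq β] (s : Finset ι)
    (src : ι → α) (tgt : ι → β) {d D H : ℕ} (hd : 0 < d)
    (hsrc : ∀ a, #{e ∈ s | src e = a} ≤ D) (htgt : ∀ b, #{e ∈ s | tgt e = b} ≤ D)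
    (hH : #s / d + D ≤ H) :
    ∃ M : Fin H → Finset ι,
      (∀ e, e ∈ s ↔ ∃ k, e ∈ M k) ∧
      (∀ k l, k ≠ l → Disjoint (M k) (M l)) ∧
      (∀ k, ∀ e ∈ M k, ∀ e' ∈ M k, e ≠ e' → src e ≠ src e' ∧ tgt e ≠ tgt e') ∧
      (∀ k, #(M k) ≤ d) := by
  obtain ⟨c, hc⟩ := exists_isProperEdgeColoring (ι := s) (src := fun e => src e)
    (tgt := fun e => tgt e) (D := D)
    (fun a => by simpa [filter_attach (src · = a)] using hsrc a)
    (fun b => by simpa [filter_attach (tgt · = b)] using htgt b)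
  obtain ⟨c', hrefine, hcard⟩ := exists_refinement_card_fiber_le hd c (H := H) (by simpa using hH)
  refine ⟨fun k => ({e | c' e = k} : Finset s).map (.subtype _), ?_, ?_, ?_, ?_⟩
  · simp
  · intro k l hkl
    rw [disjoint_map, disjoint_filter]
    rintro e - rfl
    exact hkl
  · simp only [mem_map, mem_filter, mem_univ, true_and, Function.Embedding.subtype_apply]
    rintro k _ ⟨e, rfl, rfl⟩ _ ⟨e', he', rfl⟩ hne
    exact hc (hrefine e e' he'.symm) fun h => hne (congrArg _ h)
  · simpa only [card_map] using hcard

section MaxDeg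

variable {m : ℕ} (E : Finset (Fin m × Fin m)) (v : Fin m)

theorem card_filter_fst_le_maxDeg : #{e ∈ E | e.1 = v} ≤ maxDeg E :=
  le_sup_of_le_left (le_sup (f := fun v => #{e ∈ E | e.1 = v}) (mem_univ v))

theorem card_filter_snd_le_maxDeg : #{e ∈ E | e.2 = v} ≤ maxDeg E :=
  le_sup_of_le_right (le_sup (f := fun v => #{e ∈ E | e.2 = v}) (mem_univ v))

end MaxDeg

/-- **Coloring-and-batching decomposition.**
Any directed graph on `m` vertices with `m' = |E|` edges and degree bound `Δ = maxDeg E`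
admits, for every positive integer `d`, a partition of `E` into `H = ⌈m'/d⌉ + Δ`
(possibly empty) matchings `M_1,…,M_H`, each of size at most `d`: no two edges of the
same `M_k` share a source and no two share a target. -/
theorem stmt_8 {m : ℕ} (E : Finset (Fin m × Fin m)) (d : ℕ) (hd : 0 < d) :
    ∃ M : Fin ((E.card + d - 1) / d + maxDeg E) → Finset (Fin m × Fin m),
      (∀ e, e ∈ E ↔ ∃ k, e ∈ M k) ∧
      (∀ k l, k ≠ l → Disjoint (M k) (M l)) ∧
      (∀ k, ∀ e ∈ M k, ∀ e' ∈ M k, e ≠ e' → e.1 ≠ e'.1 ∧ e.2 ≠ e'.2) ∧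
      (∀ k, (M k).card ≤ d) :=
  stmt_8_general E Prod.fst Prod.snd hd (card_filter_fst_le_maxDeg E) (card_filter_snd_le_maxDeg E)
    (Nat.add_le_add_right (Nat.div_le_div_right (by lia)) _)
end

section
/- There is an absolute constant C' > 0 such that the following holds for all γ ∈ (0,1), integers m ≥ 2, d ≥ 1, h ≥ 1, widths d_1,…,d_h with D_K = Σ_k d_k, and any fixed embeddings x_1,…,x_m ∈ ℝ^d with ‖x_v‖₂ ≤ 1 for all v. The number of distinct edge sets E ⊆ {(u,v) : u, v ∈ {1,…,m}, u ≠ v} that are recoverable with margin γ — i.e., for which there exist block matrices U = [U_1|…|U_h], V = [V_1|…|V_h] with U_k, V_k ∈ ℝ^{d×d_k}, ‖U‖_F ≤ 1, ‖V‖_F ≤ 1, and τ ∈ [−1,1] such that max_k x_uᵀ U_k V_kᵀ x_v ≥ τ + γ for every (u,v) ∈ E and max_k x_uᵀ U_k V_kᵀ x_v ≤ τ − γ for every ordered pair (u,v) ∉ E with u ≠ v — is at most (C'/γ)^{2·d·D_K + 1}. -/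
open Matrix

/-- Squared Frobenius norm of a real matrix. -/
def frobSq {n m : ℕ} (A : Matrix (Fin n) (Fin m) ℝ) : ℝ := ∑ i, ∑ j, A i j ^ 2

/-- The edge set `E` is recovered with margin `γ` by the QK parameters `(U, V, τ)` over
the embeddings `x`: every edge has max-over-heads score `max_k x_uᵀ U_k V_kᵀ x_v ≥ τ + γ`
and every ordered loop-free non-edge has all head scores `≤ τ − γ`. -/
def Recovers {m d h : ℕ} {dk : Fin h → ℕ} (x : Fin m → Fin d → ℝ)
    (U V : ∀ k : Fin h, Matrix (Fin d) (Fin (dk k)) ℝ) (τ γ : ℝ)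
    (E : Finset (Fin m × Fin m)) : Prop :=
  (∀ e ∈ E, ∃ k, τ + γ ≤ Matrix.vecMul (x e.1) (U k) ⬝ᵥ Matrix.vecMul (x e.2) (V k)) ∧
  (∀ u v : Fin m, u ≠ v → (u, v) ∉ E →
    ∀ k, Matrix.vecMul (x u) (U k) ⬝ᵥ Matrix.vecMul (x v) (V k) ≤ τ - γ)

/-! Two parameters of norm at most `1` which recover different edge sets with margin `γ` disagree by
at least `2γ` on the decision value of some head at some edge. Decision values are `3`-Lipschitz for
the sup distance on `(U, V, τ)`, so the two parameters are at distance at least `2γ/3`. Hence the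
recoverable edge sets inject into a `2γ/3`-separated subset of the unit ball, and comparing volumes
bounds their number by `(1 + 3/γ) ^ (2 d D_K + 1)`. This uses a packing in place of the dual net.
-/

open WithLp
open scoped Matrix.Norms.Frobenius

section Packing

open MeasureTheory Metric

variable {P : Type*} [NormedAddCommGroup P] [NormedSpace ℝ P] [FiniteDimensional ℝ P]

theorem natCard_le_of_pairwise_two_mul_le_dist {ι : Type*} [Finite ι] {f : ι → P} {r R : ℝ}
    (hr : 0 < r) (hR : 0 ≤ R) (hball : ∀ i, ‖f i‖ ≤ R)
    (hsep : Pairwise fun i j => 2 * r ≤ dist (f i) (f j)) :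
    (Nat.card ι : ℝ) ≤ (1 + R / r) ^ Module.finrank ℝ P := by
  have := Fintype.ofFinite ι
  borelize P
  let μ : Measure P := Measure.addHaar
  have real_ball (c : P) {s : ℝ} (hs : 0 < s) :
      μ.real (ball c s) = s ^ Module.finrank ℝ P * μ.real (ball 0 1) := by
    simp only [measureReal_def, μ.addHaar_ball_of_pos c hs, ENNReal.toReal_mul,
      ENNReal.toReal_ofReal (pow_nonneg hs.le _)]
  have unit_pos : 0 < μ.real (ball 0 1) :=
    ENNReal.toReal_pos (measure_ball_pos μ 0 one_pos).ne' measure_ball_lt_top.ne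
  have disjoint_balls : Pairwise (Function.onFun Disjoint fun i => ball (f i) r) :=
    fun i j hij => ball_disjoint_ball (by linarith [hsep hij])
  have balls_subset : ⋃ i, ball (f i) r ⊆ ball 0 (r + R) :=
    Set.iUnion_subset fun i => ball_subset_ball' (by simpa using hball i)
  have volume_le : Nat.card ι * r ^ Module.finrank ℝ P * μ.real (ball 0 1) ≤
      (r + R) ^ Module.finrank ℝ P * μ.real (ball 0 1) := by
    calc Nat.card ι * r ^ Module.finrank ℝ P * μ.real (ball 0 1)
        = ∑ i, μ.real (ball (f i) r) := by simp [real_ball _ hr, mul_assoc]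
      _ = μ.real (⋃ i, ball (f i) r) :=
        (measureReal_iUnion_fintype disjoint_balls (fun _ => measurableSet_ball)
          fun _ => measure_ball_lt_top.ne).symm
      _ ≤ μ.real (ball 0 (r + R)) := measureReal_mono balls_subset measure_ball_lt_top.ne
      _ = _ := real_ball 0 (by positivity)
  have ratio_eq : 1 + R / r = (r + R) / r := by field_simp
  rw [ratio_eq, div_pow, le_div_iff₀ (by positivity)]
  exact le_of_mul_le_mul_right volume_le unit_pos

end Packing

section Frobenius

variable {ι κ 𝕜 : Type*} [Fintype ι] [Fintype κ] [RCLike 𝕜]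

theorem norm_dotProduct_le (v w : ι → 𝕜) : ‖v ⬝ᵥ w‖ ≤ ‖toLp 2 v‖ * ‖toLp 2 w‖ := by
  simpa [EuclideanSpace.inner_toLp_toLp, EuclideanSpace.norm_eq, dotProduct_comm] using
    norm_inner_le_norm (𝕜 := 𝕜) (toLp 2 (star v)) (toLp 2 w)

theorem norm_vecMul_le_mul_frobenius_norm (x : ι → 𝕜) (A : Matrix ι κ 𝕜) :
    ‖toLp 2 (x ᵥ* A)‖ ≤ ‖toLp 2 x‖ * ‖A‖ := by
  simpa only [← frobenius_norm_replicateRow (ι := Unit), replicateRow_vecMul] using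
    frobenius_norm_mul (replicateRow Unit x) A

theorem norm_vecMul_dotProduct_vecMul_le {x y : ι → 𝕜} (hx : ‖toLp 2 x‖ ≤ 1)
    (hy : ‖toLp 2 y‖ ≤ 1) (A B : Matrix ι κ 𝕜) : ‖x ᵥ* A ⬝ᵥ y ᵥ* B‖ ≤ ‖A‖ * ‖B‖ :=
  calc ‖x ᵥ* A ⬝ᵥ y ᵥ* B‖ ≤ ‖toLp 2 (x ᵥ* A)‖ * ‖toLp 2 (y ᵥ* B)‖ := norm_dotProduct_le _ _
    _ ≤ (‖toLp 2 x‖ * ‖A‖) * (‖toLp 2 y‖ * ‖B‖) := by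
      gcongr <;> exact norm_vecMul_le_mul_frobenius_norm _ _
    _ ≤ (1 * ‖A‖) * (1 * ‖B‖) := by gcongr
    _ = ‖A‖ * ‖B‖ := by rw [one_mul, one_mul]

theorem norm_vecMul_dotProduct_vecMul_sub_le {x y : ι → 𝕜} (hx : ‖toLp 2 x‖ ≤ 1)
    (hy : ‖toLp 2 y‖ ≤ 1) (A A' B B' : Matrix ι κ 𝕜) :
    ‖x ᵥ* A ⬝ᵥ y ᵥ* B - x ᵥ* A' ⬝ᵥ y ᵥ* B'‖ ≤ ‖A - A'‖ * ‖B‖ + ‖A'‖ * ‖B - B'‖ := by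
  have telescope : x ᵥ* A ⬝ᵥ y ᵥ* B - x ᵥ* A' ⬝ᵥ y ᵥ* B' =
      x ᵥ* (A - A') ⬝ᵥ y ᵥ* B + x ᵥ* A' ⬝ᵥ y ᵥ* (B - B') := by
    simp only [vecMul_sub, sub_dotProduct, dotProduct_sub]
    ring
  rw [telescope]
  exact norm_add_le_of_le (norm_vecMul_dotProduct_vecMul_le hx hy _ _)
    (norm_vecMul_dotProduct_vecMul_le hx hy _ _)

theorem frobSq_eq_norm_sq {n m : ℕ} (A : Matrix (Fin n) (Fin m) ℝ) : frobSq A = ‖A‖ ^ 2 := by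
  rw [frobenius_norm_def, ← Real.sqrt_eq_rpow, Real.sq_sqrt (by positivity)]
  simp only [frobSq, Real.rpow_two, Real.norm_eq_abs, sq_abs]

end Frobenius

/-- Block matrices `[A_1|…|A_h]` with `A_k ∈ ℝ^{d × d_k}`, kept as a family of blocks; the
`L²` combination of the Frobenius norms of the blocks is the Frobenius norm of the block matrix. -/
abbrev HeadBlocks {h : ℕ} (d : ℕ) (dk : Fin h → ℕ) : Type :=
  PiLp 2 fun k => Matrix (Fin d) (Fin (dk k)) ℝ

/-- The space of QK parameters `(U, V, τ)`, with the sup norm of the three components. -/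
abbrev QKParams {h : ℕ} (d : ℕ) (dk : Fin h → ℕ) : Type :=
  HeadBlocks d dk × HeadBlocks d dk × ℝ

/-- The value `xᵀ U_k V_kᵀ y - τ` whose sign decides whether head `k` scores the pair of
embeddings `(x, y)` above the threshold. -/
def headDecision {d h : ℕ} {dk : Fin h → ℕ} (x y : Fin d → ℝ) (k : Fin h)
    (p : QKParams d dk) : ℝ :=
  x ᵥ* p.1 k ⬝ᵥ y ᵥ* p.2.1 k - p.2.2

section Parameters

variable {d h : ℕ} {dk : Fin h → ℕ}

theorem norm_toLp_headBlocks (U : ∀ k, Matrix (Fin d) (Fin (dk k)) ℝ) :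
    ‖(toLp 2 U : HeadBlocks d dk)‖ = √(∑ k, frobSq (U k)) := by
  simp only [PiLp.norm_eq_of_L2, frobSq_eq_norm_sq]

theorem finrank_headBlocks : Module.finrank ℝ (HeadBlocks d dk) = d * ∑ k, dk k := by
  rw [(WithLp.linearEquiv 2 ℝ _).finrank_eq, Module.finrank_pi_fintype]
  simp [Module.finrank_matrix, Finset.mul_sum]

theorem finrank_qkParams : Module.finrank ℝ (QKParams d dk) = 2 * d * (∑ k, dk k) + 1 := by
  rw [Module.finrank_prod, Module.finrank_prod, finrank_headBlocks, Module.finrank_self]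
  ring

theorem lipschitzOnWith_headDecision {x y : Fin d → ℝ} (hx : ‖toLp 2 x‖ ≤ 1)
    (hy : ‖toLp 2 y‖ ≤ 1) (k : Fin h) :
    LipschitzOnWith 3 (headDecision (dk := dk) x y k) (Metric.closedBall 0 1) := by
  refine LipschitzOnWith.of_dist_le_mul fun p hp q hq => ?_
  rw [mem_closedBall_zero_iff] at hp hq
  have hV : ‖p.2.1 k‖ ≤ 1 :=
    (PiLp.norm_apply_le _ k).trans ((norm_fst_le p.2).trans ((norm_snd_le p).trans hp))
  have hU : ‖q.1 k‖ ≤ 1 := (PiLp.norm_apply_le _ k).trans ((norm_fst_le q).trans hq)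
  have dU : ‖p.1 k - q.1 k‖ ≤ ‖p - q‖ :=
    (PiLp.norm_apply_le (p.1 - q.1) k).trans (norm_fst_le (p - q))
  have dV : ‖p.2.1 k - q.2.1 k‖ ≤ ‖p - q‖ :=
    (PiLp.norm_apply_le (p.2.1 - q.2.1) k).trans ((norm_fst_le (p - q).2).trans (norm_snd_le _))
  have dτ : ‖p.2.2 - q.2.2‖ ≤ ‖p - q‖ := (norm_snd_le (p - q).2).trans (norm_snd_le _)
  calc dist (headDecision x y k p) (headDecision x y k q)
      = ‖(x ᵥ* p.1 k ⬝ᵥ y ᵥ* p.2.1 k - x ᵥ* q.1 k ⬝ᵥ y ᵥ* q.2.1 k) - (p.2.2 - q.2.2)‖ := by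
        rw [dist_eq_norm, headDecision, headDecision, sub_sub_sub_comm]
    _ ≤ (‖p.1 k - q.1 k‖ * ‖p.2.1 k‖ + ‖q.1 k‖ * ‖p.2.1 k - q.2.1 k‖) + ‖p.2.2 - q.2.2‖ :=
        norm_sub_le_of_le (norm_vecMul_dotProduct_vecMul_sub_le hx hy _ _ _ _) le_rfl
    _ ≤ (‖p - q‖ * 1 + 1 * ‖p - q‖) + ‖p - q‖ := by gcongr
    _ = (3 : NNReal) * dist p q := by rw [dist_eq_norm]; push_cast; ring

variable {m : ℕ} {x : Fin m → Fin d → ℝ} {γ : ℝ} {E E' : Finset (Fin m × Fin m)}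
  {p q : QKParams d dk}

theorem two_mul_margin_le_three_mul_dist_of_mem_of_notMem (hx : ∀ v, ‖toLp 2 (x v)‖ ≤ 1)
    (hp : ‖p‖ ≤ 1) (hq : ‖q‖ ≤ 1) (hE : ∀ e ∈ E, e.1 ≠ e.2)
    (hpE : Recovers x p.1 p.2.1 p.2.2 γ E) (hqE' : Recovers x q.1 q.2.1 q.2.2 γ E')
    {e : Fin m × Fin m} (he : e ∈ E) (he' : e ∉ E') : 2 * γ ≤ 3 * dist p q := by
  obtain ⟨k, hk⟩ := hpE.1 e he
  have above : γ ≤ headDecision (x e.1) (x e.2) k p := le_sub_iff_add_le'.2 hk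
  have below : headDecision (x e.1) (x e.2) k q ≤ -γ := by
    have := hqE'.2 e.1 e.2 (hE e he) he' k
    rw [headDecision]
    linarith
  calc 2 * γ ≤ headDecision (x e.1) (x e.2) k p - headDecision (x e.1) (x e.2) k q := by
        linarith
    _ ≤ dist (headDecision (x e.1) (x e.2) k p) (headDecision (x e.1) (x e.2) k q) :=
        le_abs_self _
    _ ≤ 3 * dist p q := (lipschitzOnWith_headDecision (hx _) (hx _) k).dist_le_mul
        p (mem_closedBall_zero_iff.2 hp) q (mem_closedBall_zero_iff.2 hq)

theorem two_mul_margin_le_three_mul_dist_of_ne (hx : ∀ v, ‖toLp 2 (x v)‖ ≤ 1)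
    (hp : ‖p‖ ≤ 1) (hq : ‖q‖ ≤ 1) (hE : ∀ e ∈ E, e.1 ≠ e.2) (hE' : ∀ e ∈ E', e.1 ≠ e.2)
    (hpE : Recovers x p.1 p.2.1 p.2.2 γ E) (hqE' : Recovers x q.1 q.2.1 q.2.2 γ E')
    (hne : E ≠ E') : 2 * γ ≤ 3 * dist p q := by
  obtain ⟨e, he⟩ := Finset.symmDiff_nonempty.2 hne
  rcases Finset.mem_symmDiff.1 he with ⟨he, he'⟩ | ⟨he', he⟩
  · exact two_mul_margin_le_three_mul_dist_of_mem_of_notMem hx hp hq hE hpE hqE' he he'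
  · rw [dist_comm]
    exact two_mul_margin_le_three_mul_dist_of_mem_of_notMem hx hq hp hE' hqE' hpE he' he

end Parameters

theorem stmt_12_general {γ : ℝ} (hγ : 0 < γ) {m d h : ℕ} {dk : Fin h → ℕ}
    {x : Fin m → Fin d → ℝ} (hx : ∀ v, √(∑ r, x v r ^ 2) ≤ 1) :
    ({E : Finset (Fin m × Fin m) | (∀ e ∈ E, e.1 ≠ e.2) ∧
        ∃ (U V : ∀ k : Fin h, Matrix (Fin d) (Fin (dk k)) ℝ) (τ : ℝ),
          √(∑ k, frobSq (U k)) ≤ 1 ∧ √(∑ k, frobSq (V k)) ≤ 1 ∧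
          |τ| ≤ 1 ∧ Recovers x U V τ γ E}.ncard : ℝ)
      ≤ (1 + 3 / γ) ^ (2 * d * (∑ k, dk k) + 1) := by
  set 𝓔 : Set (Finset (Fin m × Fin m)) := {E | _}
  have norm_x (v : Fin m) : ‖toLp 2 (x v)‖ ≤ 1 := by
    simpa only [EuclideanSpace.norm_eq, Real.norm_eq_abs, sq_abs] using hx v
  have exists_params (E : 𝓔) :
      ∃ p : QKParams d dk, ‖p‖ ≤ 1 ∧ Recovers x p.1 p.2.1 p.2.2 γ E.1 := by
    obtain ⟨-, U, V, τ, hU, hV, hτ, hE⟩ := E.2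
    rw [← norm_toLp_headBlocks] at hU hV
    exact ⟨(toLp 2 U, toLp 2 V, τ), norm_prod_le_iff.2 ⟨hU, norm_prod_le_iff.2 ⟨hV, hτ⟩⟩, hE⟩
  choose p norm_p recovers_p using exists_params
  have separated : Pairwise fun E E' : 𝓔 => 2 * (γ / 3) ≤ dist (p E) (p E') := by
    intro E E' hne
    have := two_mul_margin_le_three_mul_dist_of_ne norm_x (norm_p E) (norm_p E') E.2.1 E'.2.1
      (recovers_p E) (recovers_p E') (Subtype.coe_ne_coe.2 hne)
    linarith
  have card_le :=
    natCard_le_of_pairwise_two_mul_le_dist (by positivity) zero_le_one norm_p separated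
  rwa [Nat.card_coe_set_eq, finrank_qkParams, one_div_div] at card_le

/-- **Margin-counting step of the description-length lower bound.**
There is an absolute `C' > 0` such that for any `γ ∈ (0,1)`, `m ≥ 2`, `d ≥ 1`, `h ≥ 1`,
head widths `dk` with `D_K = Σ_k dk k`, and unit-norm embeddings `x_v`, the number of
loop-free edge sets recoverable with margin `γ` using parameters with `‖U‖_F ≤ 1`,
`‖V‖_F ≤ 1`, `|τ| ≤ 1` is at most `(C'/γ)^(2·d·D_K + 1)`. -/
theorem stmt_12 :
    ∃ C' > (0 : ℝ), ∀ γ : ℝ, 0 < γ → γ < 1 →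
      ∀ m d h : ℕ, 2 ≤ m → 1 ≤ d → 1 ≤ h → ∀ dk : Fin h → ℕ,
      ∀ x : Fin m → Fin d → ℝ, (∀ v, Real.sqrt (∑ r, x v r ^ 2) ≤ 1) →
      ({E : Finset (Fin m × Fin m) | (∀ e ∈ E, e.1 ≠ e.2) ∧
          ∃ (U V : ∀ k : Fin h, Matrix (Fin d) (Fin (dk k)) ℝ) (τ : ℝ),
            Real.sqrt (∑ k, frobSq (U k)) ≤ 1 ∧
            Real.sqrt (∑ k, frobSq (V k)) ≤ 1 ∧
            |τ| ≤ 1 ∧ Recovers x U V τ γ E}.ncard : ℝ)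
        ≤ (C' / γ) ^ (2 * d * (∑ k, dk k) + 1) := by
  refine ⟨4, four_pos, fun γ hγ hγ1 m d h _ _ _ dk x hx => (stmt_12_general hγ hx).trans ?_⟩
  have base_le : 1 + 3 / γ ≤ 4 / γ := by
    rw [one_add_div hγ.ne']
    gcongr
    linarith
  gcongr
end

section
/- For every ε ∈ (0,1] and γ ∈ (0,1) there exist a constant c > 0 and an integer m₀ such that for all m ≥ m₀ and all integers m' with 1 ≤ m' ≤ m^{2−ε}: if there exist embeddings x_1,…,x_m ∈ ℝ^d with ‖x_v‖₂ ≤ 1 and, for every directed loop-free graph on {1,…,m} with exactly m' edges, parameters U = [U_1|…|U_h], V = [V_1|…|V_h] with ‖U‖_F ≤ 1, ‖V‖_F ≤ 1, τ ∈ [−1,1], and total key dimension D_K = Σ_k d_k recovering that graph with margin γ (edges score at least τ + γ and ordered non-edges at most τ − γ under S(u,v) = max_k x_uᵀ U_k V_kᵀ x_v), then d·D_K ≥ c·m'·log m. -/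
open Matrix

/-!
The parameters `(U, V)` recovering the different graphs with `m'` edges form a `γ`-separated subset
of the unit ball: two graphs of equal size each have an edge missing from the other, so whichever
threshold is larger, some score moves by at least `2γ` from one parameter to the other, while scores
are Lipschitz in `(U, V)`. A volume comparison in dimension `2 d D_K` then gives
`(m(m-1)).choose m' ≤ (1 + 2/γ) ^ (2 d D_K)`. For `m' ≤ m ^ (2 - ε)` the left-hand side is at least
`(m ^ (ε/2)) ^ m'`, and taking logarithms finishes the proof.
-/

section Packing

open MeasureTheory Metric

theorem card_le_pow_finrank_of_le_norm_sub {ι E : Type*} [NormedAddCommGroup E] [NormedSpace ℝ E]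
    [FiniteDimensional ℝ E] {s : Finset ι} {f : ι → E} {R δ : ℝ} (hR : 0 ≤ R) (hδ : 0 < δ)
    (hf : ∀ i ∈ s, ‖f i‖ ≤ R) (hsep : (s : Set ι).Pairwise fun i j => δ ≤ ‖f i - f j‖) :
    (s.card : ℝ) ≤ (1 + 2 * R / δ) ^ Module.finrank ℝ E := by
  borelize E
  let μ : Measure E := Measure.addHaar
  have hr : 0 < δ / 2 := half_pos hδ
  have hdisj : (s : Set ι).PairwiseDisjoint fun i => ball (f i) (δ / 2) := fun i hi j hj hij =>
    ball_disjoint_ball <| by simpa only [add_halves, dist_eq_norm] using hsep hi hj hij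
  have hsub : (⋃ i ∈ s, ball (f i) (δ / 2)) ⊆ ball 0 (δ / 2 + R) :=
    Set.iUnion₂_subset fun i hi => ball_subset_ball' <| by
      simpa only [dist_zero_right, add_le_add_iff_left] using hf i hi
  have hvol : (s.card * ENNReal.ofReal ((δ / 2) ^ Module.finrank ℝ E)) * μ (ball 0 1) ≤
      ENNReal.ofReal ((δ / 2 + R) ^ Module.finrank ℝ E) * μ (ball 0 1) := by
    calc
      _ = ∑ i ∈ s, μ (ball (f i) (δ / 2)) := by
        simp only [μ.addHaar_ball_of_pos _ hr, Finset.sum_const, nsmul_eq_mul, mul_assoc]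
      _ = μ (⋃ i ∈ s, ball (f i) (δ / 2)) :=
        (measure_biUnion_finset hdisj fun _ _ => measurableSet_ball).symm
      _ ≤ μ (ball 0 (δ / 2 + R)) := measure_mono hsub
      _ = _ := μ.addHaar_ball_of_pos _ (by positivity)
  have hcard : s.card * (δ / 2) ^ Module.finrank ℝ E ≤ (δ / 2 + R) ^ Module.finrank ℝ E := by
    have h := ENNReal.toReal_le_of_le_ofReal (by positivity) <| (ENNReal.mul_le_mul_iff_left
      (measure_ball_pos μ _ zero_lt_one).ne' measure_ball_lt_top.ne).1 hvol
    rwa [ENNReal.toReal_mul, ENNReal.toReal_natCast, ENNReal.toReal_ofReal (by positivity)] at h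
  have hratio : 1 + 2 * R / δ = (δ / 2 + R) / (δ / 2) := by field_simp
  rwa [hratio, div_pow, le_div_iff₀ (by positivity)]

end Packing

section Binomial

theorem pow_le_choose_of_mul_le {K : Type*} [Field K] [LinearOrder K] [IsStrictOrderedRing K]
    {q : K} (hq : 1 ≤ q) {n k : ℕ} (h : q * k ≤ n) :
    q ^ k ≤ n.choose k := by
  induction k generalizing n with
  | zero => simp
  | succ k ih =>
    cases n with
    | zero =>
      push_cast at h
      nlinarith [(k.cast_nonneg : (0 : K) ≤ k)]
    | succ n =>
      push_cast at h
      have hchoose : ((n : K) + 1) * n.choose k = (n + 1).choose (k + 1) * ((k : K) + 1) := by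
        exact_mod_cast Nat.add_one_mul_choose_eq n k
      have hih : q ^ k ≤ n.choose k := ih (by linarith)
      refine le_of_mul_le_mul_right ?_ (by positivity : (0 : K) < k + 1)
      calc q ^ (k + 1) * ((k : K) + 1) = (q * (k + 1)) * q ^ k := by ring
        _ ≤ ((n : K) + 1) * n.choose k := by gcongr
        _ = (n + 1).choose (k + 1) * ((k : K) + 1) := hchoose

theorem rpow_half_mul_le_sq_sub_self {x y ε : ℝ} (hx : 2 ≤ x) (hxε : 2 ≤ x ^ (ε / 2))
    (hy : y ≤ x ^ (2 - ε)) : x ^ (ε / 2) * y ≤ x ^ 2 - x := by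
  have hx0 : 0 < x := by linarith
  have hsq : x ^ (ε / 2) * (x ^ (ε / 2) * x ^ (2 - ε)) = x ^ 2 := by
    rw [← Real.rpow_add hx0, ← Real.rpow_add hx0, ← Real.rpow_natCast]
    congr 1
    push_cast
    ring
  have hhalf : 2 * (x ^ (ε / 2) * x ^ (2 - ε)) ≤ x ^ 2 := by
    rw [← hsq]
    gcongr
  have hmono : x ^ (ε / 2) * y ≤ x ^ (ε / 2) * x ^ (2 - ε) := by gcongr
  nlinarith

theorem rpow_half_pow_le_choose {m k : ℕ} {ε : ℝ} (hm : 2 ≤ m) (hmε : 2 ≤ (m : ℝ) ^ (ε / 2))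
    (hk : (k : ℝ) ≤ (m : ℝ) ^ (2 - ε)) : ((m : ℝ) ^ (ε / 2)) ^ k ≤ (m * m - m).choose k := by
  refine pow_le_choose_of_mul_le (one_le_two.trans hmε) ?_
  rw [Nat.cast_sub (Nat.le_mul_self m), Nat.cast_mul, ← sq]
  exact rpow_half_mul_le_sq_sub_self (by exact_mod_cast hm) hmε hk

end Binomial

section Scores

open scoped Matrix.Norms.Frobenius

open WithLp (toLp)

section Bilinear

variable {m n : Type*} [Fintype m] [Fintype n]

theorem norm_toLp_vecMul_le (x : m → ℝ) (A : Matrix m n ℝ) :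
    ‖toLp 2 (x ᵥ* A)‖ ≤ ‖toLp 2 x‖ * ‖A‖ := by
  simpa only [← replicateRow_vecMul, frobenius_norm_replicateRow] using
    frobenius_norm_mul (replicateRow Unit x) A

theorem vecMul_dotProduct_vecMul_le (x y : m → ℝ) (A B : Matrix m n ℝ) :
    x ᵥ* A ⬝ᵥ y ᵥ* B ≤ (‖toLp 2 x‖ * ‖A‖) * (‖toLp 2 y‖ * ‖B‖) :=
  calc x ᵥ* A ⬝ᵥ y ᵥ* B = inner ℝ (toLp 2 (y ᵥ* B)) (toLp 2 (x ᵥ* A)) := by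
        rw [EuclideanSpace.inner_toLp_toLp, star_trivial]
    _ ≤ ‖toLp 2 (y ᵥ* B)‖ * ‖toLp 2 (x ᵥ* A)‖ := real_inner_le_norm _ _
    _ = ‖toLp 2 (x ᵥ* A)‖ * ‖toLp 2 (y ᵥ* B)‖ := mul_comm _ _
    _ ≤ _ := by gcongr <;> exact norm_toLp_vecMul_le _ _

theorem vecMul_dotProduct_vecMul_sub_le {x y : m → ℝ} {A B A' B' : Matrix m n ℝ}
    (hx : ‖toLp 2 x‖ ≤ 1) (hy : ‖toLp 2 y‖ ≤ 1) (hB : ‖B‖ ≤ 1) (hA' : ‖A'‖ ≤ 1) :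
    x ᵥ* A ⬝ᵥ y ᵥ* B - x ᵥ* A' ⬝ᵥ y ᵥ* B' ≤ ‖A - A'‖ + ‖B - B'‖ :=
  calc x ᵥ* A ⬝ᵥ y ᵥ* B - x ᵥ* A' ⬝ᵥ y ᵥ* B'
      = x ᵥ* (A - A') ⬝ᵥ y ᵥ* B + x ᵥ* A' ⬝ᵥ y ᵥ* (B - B') := by
        rw [vecMul_sub, vecMul_sub, sub_dotProduct, dotProduct_sub]
        ring
    _ ≤ (‖toLp 2 x‖ * ‖A - A'‖) * (‖toLp 2 y‖ * ‖B‖)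
          + (‖toLp 2 x‖ * ‖A'‖) * (‖toLp 2 y‖ * ‖B - B'‖) := by
        gcongr <;> exact vecMul_dotProduct_vecMul_le _ _ _ _
    _ ≤ (1 * ‖A - A'‖) * (1 * 1) + (1 * 1) * (1 * ‖B - B'‖) := by gcongr
    _ = ‖A - A'‖ + ‖B - B'‖ := by ring

end Bilinear

/-- The space of block matrices `[W₁ | … | W_h]` with `W_k` of size `d × dk k`, one of the two
halves of the QK parameters. The `ℓ²` combination of the Frobenius norms of the blocks makes its
norm the Frobenius norm of the concatenated matrix. -/
abbrev HeadMatrices {h : ℕ} (d : ℕ) (dk : Fin h → ℕ) : Type :=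
  PiLp 2 fun k => Matrix (Fin d) (Fin (dk k)) ℝ

variable {m d h : ℕ} {dk : Fin h → ℕ}

theorem finrank_headMatrices (d : ℕ) (dk : Fin h → ℕ) :
    Module.finrank ℝ (HeadMatrices d dk) = d * ∑ k, dk k := by
  rw [(WithLp.linearEquiv 2 ℝ _).finrank_eq, Module.finrank_pi_fintype, Finset.mul_sum]
  simp only [Module.finrank_matrix, Fintype.card_fin, Module.finrank_self, mul_one]

theorem norm_toLp_eq_sqrt_sum_frobSq (U : ∀ k : Fin h, Matrix (Fin d) (Fin (dk k)) ℝ) :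
    ‖(toLp 2 U : HeadMatrices d dk)‖ = √(∑ k, frobSq (U k)) := by
  have hblock (k : Fin h) : ‖U k‖ ^ 2 = frobSq (U k) := by
    have h0 : 0 ≤ frobSq (U k) :=
      Finset.sum_nonneg fun _ _ => Finset.sum_nonneg fun _ _ => sq_nonneg _
    rw [frobenius_norm_def, ← Real.sqrt_eq_rpow]
    simpa [frobSq] using Real.sq_sqrt h0
  simp only [PiLp.norm_eq_of_L2, hblock]

theorem Recovers.two_mul_le_norm_sub_add_norm_sub {x : Fin m → Fin d → ℝ}
    (hx : ∀ v, ‖toLp 2 (x v)‖ ≤ 1) {U V U' V' : HeadMatrices d dk} {τ τ' γ : ℝ}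
    {E E' : Finset (Fin m × Fin m)} (hR : Recovers x U.ofLp V.ofLp τ γ E)
    (hR' : Recovers x U'.ofLp V'.ofLp τ' γ E') (hV : ‖V‖ ≤ 1) (hU' : ‖U'‖ ≤ 1) (hτ : τ' ≤ τ)
    (hE : ∀ e ∈ E, e.1 ≠ e.2) (hEE' : ¬E ⊆ E') :
    2 * γ ≤ ‖U - U'‖ + ‖V - V'‖ := by
  obtain ⟨⟨u, v⟩, huv, huv'⟩ := Finset.not_subset.1 hEE'
  obtain ⟨k, hedge⟩ := hR.1 _ huv
  have hnonedge := hR'.2 u v (hE _ huv) huv' k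
  have hlip := vecMul_dotProduct_vecMul_sub_le (A := U k) (B' := V' k) (hx u) (hx v)
    ((PiLp.norm_apply_le V k).trans hV) ((PiLp.norm_apply_le U' k).trans hU')
  have hUk : ‖U k - U' k‖ ≤ ‖U - U'‖ := PiLp.norm_apply_le (U - U') k
  have hVk : ‖V k - V' k‖ ≤ ‖V - V'‖ := PiLp.norm_apply_le (V - V') k
  linarith

theorem Recovers.le_norm_sub {x : Fin m → Fin d → ℝ} (hx : ∀ v, ‖toLp 2 (x v)‖ ≤ 1)
    {P P' : HeadMatrices d dk × HeadMatrices d dk} {τ τ' γ : ℝ} {E E' : Finset (Fin m × Fin m)}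
    (hR : Recovers x P.1.ofLp P.2.ofLp τ γ E) (hR' : Recovers x P'.1.ofLp P'.2.ofLp τ' γ E')
    (hP : ‖P‖ ≤ 1) (hP' : ‖P'‖ ≤ 1) (hE : ∀ e ∈ E, e.1 ≠ e.2) (hE' : ∀ e ∈ E', e.1 ≠ e.2)
    (hcard : E.card = E'.card) (hne : E ≠ E') : γ ≤ ‖P - P'‖ := by
  wlog hτ : τ' ≤ τ generalizing P P' τ τ' E E'
  · rw [norm_sub_rev]
    exact this hR' hR hP' hP hE' hE hcard.symm hne.symm (le_of_not_ge hτ)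
  have hEE' : ¬E ⊆ E' := fun hs => hne (Finset.eq_of_subset_of_card_le hs hcard.ge)
  have h := hR.two_mul_le_norm_sub_add_norm_sub hx hR' ((norm_snd_le P).trans hP)
    ((norm_fst_le P').trans hP') hτ hE hEE'
  have hfst : ‖P.1 - P'.1‖ ≤ ‖P - P'‖ := norm_fst_le (P - P')
  have hsnd : ‖P.2 - P'.2‖ ≤ ‖P - P'‖ := norm_snd_le (P - P')
  linarith

theorem choose_le_pow_of_forall_recovers {x : Fin m → Fin d → ℝ} (hx : ∀ v, ‖toLp 2 (x v)‖ ≤ 1)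
    {γ : ℝ} (hγ : 0 < γ) {m' : ℕ}
    (hrec : ∀ E : Finset (Fin m × Fin m), (∀ e ∈ E, e.1 ≠ e.2) → E.card = m' →
      ∃ (U V : HeadMatrices d dk) (τ : ℝ), ‖U‖ ≤ 1 ∧ ‖V‖ ≤ 1 ∧ Recovers x U.ofLp V.ofLp τ γ E) :
    ((m * m - m).choose m' : ℝ) ≤ (1 + 2 / γ) ^ (2 * (d * ∑ k, dk k)) := by
  set graphs := (Finset.univ : Finset (Fin m)).offDiag.powersetCard m' with hgraphs
  have hgraph : ∀ E ∈ graphs, (∀ e ∈ E, e.1 ≠ e.2) ∧ E.card = m' := fun E hE =>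
    have ⟨hsub, hcard⟩ := Finset.mem_powersetCard.1 hE
    ⟨fun _ he => (Finset.mem_offDiag.1 (hsub he)).2.2, hcard⟩
  have hparam : ∀ E, ∃ (P : HeadMatrices d dk × HeadMatrices d dk) (τ : ℝ), E ∈ graphs →
      ‖P‖ ≤ 1 ∧ Recovers x P.1.ofLp P.2.ofLp τ γ E := fun E => by
    by_cases hE : E ∈ graphs
    · obtain ⟨U, V, τ, hU, hV, hR⟩ := hrec E (hgraph E hE).1 (hgraph E hE).2
      exact ⟨(U, V), τ, fun _ => ⟨norm_prod_le_iff.2 ⟨hU, hV⟩, hR⟩⟩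
    · exact ⟨0, 0, fun h => absurd h hE⟩
  choose P τ hP using hparam
  have hsep : (graphs : Set (Finset (Fin m × Fin m))).Pairwise fun E E' => γ ≤ ‖P E - P E'‖ :=
    fun E hE E' hE' hne => (hP E hE).2.le_norm_sub hx (hP E' hE').2 (hP E hE).1 (hP E' hE').1
      (hgraph E hE).1 (hgraph E' hE').1 ((hgraph E hE).2.trans (hgraph E' hE').2.symm) hne
  have hpack := card_le_pow_finrank_of_le_norm_sub zero_le_one hγ (fun E hE => (hP E hE).1) hsep
  rwa [hgraphs, Finset.card_powersetCard, Finset.offDiag_card, Finset.card_univ, Fintype.card_fin,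
    Module.finrank_prod, finrank_headMatrices, ← two_mul, mul_one] at hpack

end Scores

/-- **Sparse-regime lower bound (`m' ≤ m^{2−ε}`).**
For every `ε ∈ (0,1]` and `γ ∈ (0,1)` there are `c > 0` and `m₀` such that for all
`m ≥ m₀` and all `1 ≤ m' ≤ m^{2−ε}`: if some unit-norm embeddings in `ℝ^d` allow every
loop-free directed graph on `m` vertices with exactly `m'` edges to be recovered with
margin `γ` by normalized QK parameters of total key dimension `D_K = Σ_k dk k`, then
`d·D_K ≥ c·m'·log m`. -/
theorem stmt_15 (ε γ : ℝ) (hε0 : 0 < ε) (hε1 : ε ≤ 1) (hγ0 : 0 < γ) (hγ1 : γ < 1) :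
    ∃ c > (0 : ℝ), ∃ m₀ : ℕ, ∀ m : ℕ, m₀ ≤ m →
      ∀ m' : ℕ, 1 ≤ m' → (m' : ℝ) ≤ (m : ℝ) ^ (2 - ε) →
      ∀ d h : ℕ, 1 ≤ d → ∀ dk : Fin h → ℕ,
      ∀ x : Fin m → Fin d → ℝ, (∀ v, Real.sqrt (∑ r, x v r ^ 2) ≤ 1) →
      (∀ E : Finset (Fin m × Fin m), (∀ e ∈ E, e.1 ≠ e.2) → E.card = m' →
        ∃ (U V : ∀ k : Fin h, Matrix (Fin d) (Fin (dk k)) ℝ) (τ : ℝ),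
          Real.sqrt (∑ k, frobSq (U k)) ≤ 1 ∧
          Real.sqrt (∑ k, frobSq (V k)) ≤ 1 ∧
          |τ| ≤ 1 ∧ Recovers x U V τ γ E) →
      c * m' * Real.log m ≤ ((d * ∑ k, dk k : ℕ) : ℝ) := by
  have hL : 0 < Real.log (1 + 2 / γ) := Real.log_pos (lt_add_of_pos_right 1 (by positivity))
  have hlarge : ∀ᶠ m : ℕ in Filter.atTop, 2 ≤ m ∧ (2 : ℝ) ≤ (m : ℝ) ^ (ε / 2) :=
    (Filter.eventually_ge_atTop 2).and <| ((tendsto_rpow_atTop (half_pos hε0)).comp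
      tendsto_natCast_atTop_atTop).eventually_ge_atTop 2
  obtain ⟨m₀, hm₀⟩ := Filter.eventually_atTop.1 hlarge
  refine ⟨ε / (4 * Real.log (1 + 2 / γ)), by positivity, m₀, ?_⟩
  intro m hm m' _ hm' d h _ dk x hx hrec
  obtain ⟨hm2, hmε⟩ := hm₀ m hm
  have hm0 : (0 : ℝ) < m := by positivity
  have hupper : ((m * m - m).choose m' : ℝ) ≤ (1 + 2 / γ) ^ (2 * (d * ∑ k, dk k)) := by
    refine choose_le_pow_of_forall_recovers (x := x) (fun v => ?_) hγ0 fun E hE hcard => ?_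
    · simpa only [EuclideanSpace.norm_eq, Real.norm_eq_abs, sq_abs] using hx v
    · obtain ⟨U, V, τ, hU, hV, -, hR⟩ := hrec E hE hcard
      rw [← norm_toLp_eq_sqrt_sum_frobSq] at hU hV
      exact ⟨_, _, τ, hU, hV, hR⟩
  have hlog := Real.log_le_log (by positivity) ((rpow_half_pow_le_choose hm2 hmε hm').trans hupper)
  rw [Real.log_pow, Real.log_pow, Real.log_rpow hm0, Nat.cast_mul 2, Nat.cast_ofNat] at hlog
  rw [div_mul_eq_mul_div, div_mul_eq_mul_div, div_le_iff₀ (by positivity)]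
  linarith
end
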